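/- Let G be a modular noetherian right ℓ-group with strong order unit s, s^{-1} = ⋀X(G⁻), and let 𝒞(G⁻) = Cent([s^{-1},e]) be the center of the strong order interval. If a, b ∈ 𝒞(G⁻) with b ≤ a, then b a^{-1} ∈ 𝒞(G⁻). Consequently 𝒞(G⁻) is closed under the arrow operation a → b = (a ∧ b)a^{-1}. -/

import Mathlib

universe u

/-- An element `s` of a right ℓ-group is normal if left multiplication by `s` preserves
the lattice operations. -/
def IsNormal {G : Type u} [Lattice G] [Group G] (s : G) : Prop :=
  ∀ x y : G, s * (x ⊓ y) = s * x ⊓ s * y ∧ s * (x ⊔ y) = s * x ⊔ s * y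

/-- A strong order unit: a normal element `s > 1` such that every `g` satisfies
`g ≤ sⁿ` for some integer `n`. -/
def IsStrongOrderUnit {G : Type u} [Lattice G] [Group G] (s : G) : Prop :=
  1 < s ∧ IsNormal s ∧ ∀ g : G, ∃ n : ℤ, g ≤ s ^ n

/-- A right ℓ-group is noetherian if every ascending chain bounded above and every
descending chain bounded below stabilizes. -/
def IsLatticeNoetherian (G : Type u) [Lattice G] : Prop :=
  (∀ f : ℕ → G, Monotone f → (∃ h : G, ∀ n, f n ≤ h) → ∃ N, ∀ m, N ≤ m → f m = f N) ∧
  (∀ f : ℕ → G, Antitone f → (∃ h : G, ∀ n, h ≤ f n) → ∃ N, ∀ m, N ≤ m → f m = f N)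

/-- An element `z` of a bounded lattice `L` is central if some lattice isomorphism
`L ≅ L₁ × L₂` sends `z` to `(⊥, ⊤)`. -/
def IsCentralElt {L : Type u} [Lattice L] [BoundedOrder L] (z : L) : Prop :=
  ∃ (L₁ L₂ : Type u) (i₁ : Lattice L₁) (i₂ : Lattice L₂)
    (b₁ : BoundedOrder L₁) (b₂ : BoundedOrder L₂) (φ : L ≃o (L₁ × L₂)),
    φ z = (⊥, ⊤)

/-- `x` lies in the interval `[lo, hi]` and is a central element of that interval. -/
def IsCentralIn {G : Type u} [Lattice G] (x lo hi : G) : Prop :=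
  ∃ hmem : x ∈ Set.Icc lo hi,
    letI : Fact (lo ≤ hi) := ⟨hmem.1.trans hmem.2⟩
    IsCentralElt (⟨x, hmem⟩ : Set.Icc lo hi)

/-- Elementary form of centrality in the interval `[lo, hi]`. -/
def CPair {G : Type u} [Lattice G] (lo hi z z' : G) : Prop :=
  lo ≤ z ∧ z ≤ hi ∧ lo ≤ z' ∧ z' ≤ hi ∧ z ⊓ z' = lo ∧ z ⊔ z' = hi ∧
    ∀ x, lo ≤ x → x ≤ hi → x ≤ (x ⊓ z) ⊔ (x ⊓ z')

def CElt {G : Type u} [Lattice G] (lo hi z : G) : Prop := ∃ z', CPair lo hi z z'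

section lat
variable {G : Type u} [Lattice G]

theorem CPair.symm {lo hi z z' : G} (h : CPair lo hi z z') : CPair lo hi z' z := by
  obtain ⟨h1, h2, h3, h4, h5, h6, h7⟩ := h
  exact ⟨h3, h4, h1, h2, by rw [inf_comm, h5], by rw [sup_comm, h6],
    fun x a b => by rw [sup_comm]; exact h7 x a b⟩

theorem CPair.map {H : Type u} [Lattice H] {lo hi z z' : G} (h : CPair lo hi z z') (e : G ≃o H) :
    CPair (e lo) (e hi) (e z) (e z') := by
  obtain ⟨h1, h2, h3, h4, h5, h6, h7⟩ := h
  refine ⟨e.monotone h1, e.monotone h2, e.monotone h3, e.monotone h4,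
    by rw [← e.map_inf, h5], by rw [← e.map_sup, h6], fun x a b => ?_⟩
  have := e.monotone (h7 (e.symm x) (by rwa [e.le_symm_apply]) (by rwa [e.symm_apply_le]))
  simpa [e.map_sup, e.map_inf] using this

theorem CElt.map {lo hi z : G} (h : CElt lo hi z) (e : G ≃o G) :
    CElt (e lo) (e hi) (e z) := by
  obtain ⟨z', h⟩ := h
  exact ⟨_, h.map e⟩

theorem cpair_bot {lo hi : G} (h : lo ≤ hi) : CPair lo hi lo hi :=
  ⟨le_rfl, h, h, le_rfl, inf_eq_left.2 h, sup_eq_right.2 h, fun x _ b => by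
    rw [inf_eq_left.2 b]; exact le_sup_right⟩

variable [IsModularLattice G]

theorem sup_inf_of_le {p q z : G} (h : p ≤ z) : (p ⊔ q) ⊓ z = p ⊔ (q ⊓ z) :=
  (sup_inf_assoc_of_le q h)

theorem CPair.proj {lo hi z z' p q : G} (h : CPair lo hi z z') (h0 : lo ≤ p) (hp : p ≤ z)
    (hq : q ≤ z') : (p ⊔ q) ⊓ z = p := by
  rw [sup_inf_of_le hp]
  apply sup_eq_left.2
  refine le_trans ?_ h0
  rw [← h.2.2.2.2.1]
  exact le_inf inf_le_right (inf_le_left.trans hq)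

theorem CPair.eq {lo hi z z' x : G} (h : CPair lo hi z z') (h1 : lo ≤ x) (h2 : x ≤ hi) :
    (x ⊓ z) ⊔ (x ⊓ z') = x :=
  le_antisymm (sup_le inf_le_left inf_le_left) (h.2.2.2.2.2.2 x h1 h2)

theorem CPair.distrib {lo hi z z' x y : G} (h : CPair lo hi z z') (h1 : lo ≤ x) (h2 : x ≤ hi)
    (h3 : lo ≤ y) (h4 : y ≤ hi) : (x ⊔ y) ⊓ z = (x ⊓ z) ⊔ (y ⊓ z) := by
  have e : x ⊔ y = ((x ⊓ z) ⊔ (y ⊓ z)) ⊔ ((x ⊓ z') ⊔ (y ⊓ z')) := by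
    rw [sup_sup_sup_comm, h.eq h1 h2, h.eq h3 h4]
  conv_lhs => rw [e]
  exact h.proj (le_sup_of_le_left (le_inf h1 h.1)) (sup_le inf_le_right inf_le_right)
    (sup_le inf_le_right inf_le_right)

theorem CPair.dual_eq {lo hi z z' x : G} (h : CPair lo hi z z') (h1 : lo ≤ x) (h2 : x ≤ hi) :
    (x ⊔ z) ⊓ (x ⊔ z') ≤ x := by
  rw [sup_inf_of_le le_sup_left, inf_comm z, h.distrib h1 h2 h.2.2.1 h.2.2.2.1,
    inf_comm z', h.2.2.2.2.1]
  exact sup_le le_rfl (sup_le inf_le_left h1)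

theorem CPair.restrict_low {lo hi z z' c : G} (h : CPair lo hi z z') (h1 : lo ≤ c) (h2 : c ≤ hi) :
    CPair lo c (z ⊓ c) (z' ⊓ c) := by
  have := h.eq h1 h2
  refine ⟨le_inf h.1 h1, inf_le_right, le_inf h.2.2.1 h1, inf_le_right, ?_, ?_, ?_⟩
  · rw [← inf_inf_distrib_right, h.2.2.2.2.1, inf_eq_left.2 h1]
  · rw [inf_comm z, inf_comm z', this]
  · intro x a b
    rw [← inf_assoc, ← inf_assoc, inf_eq_left.2 (inf_le_left.trans b),
      inf_eq_left.2 (inf_le_left.trans b)]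
    exact h.2.2.2.2.2.2 x a (b.trans h2)

theorem CPair.restrict_high {lo hi z z' c : G} (h : CPair lo hi z z') (h1 : lo ≤ c) (h2 : c ≤ hi) :
    CPair c hi (z ⊔ c) (z' ⊔ c) := by
  refine ⟨le_sup_right, sup_le h.2.1 h2, le_sup_right, sup_le h.2.2.2.1 h2, ?_, ?_, ?_⟩
  · rw [sup_comm z, sup_comm z']
    exact le_antisymm (h.dual_eq h1 h2) (le_inf le_sup_left le_sup_left)
  · rw [← sup_sup_distrib_right, h.2.2.2.2.2.1, sup_eq_left.2 h2]
  · intro x a b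
    calc x ≤ (x ⊓ z) ⊔ (x ⊓ z') := h.2.2.2.2.2.2 x (h1.trans a) b
      _ ≤ _ := sup_le_sup (inf_le_inf le_rfl le_sup_left) (inf_le_inf le_rfl le_sup_left)

theorem CPair.extend {lo hi z z' p p' q q' : G} (h : CPair lo hi z z') (hp : CPair lo z p p')
    (hq : CPair z hi q q') : CPair lo hi (p ⊔ q ⊓ z') (p' ⊔ q' ⊓ z') := by
  have hlz := h.1
  have hzh := h.2.1
  have hlz' := h.2.2.1
  have hzh' := h.2.2.2.1
  have hzz := h.2.2.2.2.1
  have hQ : lo ≤ q ⊓ z' := le_inf (hlz.trans hq.1) hlz'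
  have hQ' : lo ≤ q' ⊓ z' := le_inf (hlz.trans hq.2.2.1) hlz'
  have hu : p ⊔ q ⊓ z' ≤ hi := sup_le (hp.2.1.trans hzh) (inf_le_right.trans hzh')
  have hu' : p' ⊔ q' ⊓ z' ≤ hi := sup_le (hp.2.2.2.1.trans hzh) (inf_le_right.trans hzh')
  have hl : lo ≤ p ⊔ q ⊓ z' := le_sup_of_le_left hp.1
  have hl' : lo ≤ p' ⊔ q' ⊓ z' := le_sup_of_le_left hp.2.2.1
  have key : ∀ y, lo ≤ y → y ≤ z' → y ≤ (y ⊓ (q ⊓ z')) ⊔ (y ⊓ (q' ⊓ z')) := by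
    intro y a b
    have e := hq.eq (x := y ⊔ z) le_sup_right (sup_le (b.trans hzh') hzh)
    have e1 : (y ⊔ z) ⊓ z' = y := h.symm.proj a b le_rfl
    have e2 := h.symm.distrib (x := (y ⊔ z) ⊓ q) (y := (y ⊔ z) ⊓ q')
      (le_inf (le_sup_of_le_left a) (hlz.trans hq.1)) (inf_le_right.trans hq.2.1)
      (le_inf (le_sup_of_le_left a) (hlz.trans hq.2.2.1)) (inf_le_right.trans hq.2.2.2.1)
    rw [e, e1, inf_right_comm, e1, inf_right_comm, e1] at e2
    have f1 : y ⊓ (q ⊓ z') = y ⊓ q := by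
      rw [← inf_assoc, inf_eq_left.2 (inf_le_left.trans b)]
    have f2 : y ⊓ (q' ⊓ z') = y ⊓ q' := by
      rw [← inf_assoc, inf_eq_left.2 (inf_le_left.trans b)]
    rw [f1, f2]
    exact e2.le
  refine ⟨hl, hu, hl', hu', ?_, ?_, ?_⟩
  · apply le_antisymm _ (le_inf hl hl')
    refine (h.2.2.2.2.2.2 _ (le_inf hl hl') (inf_le_left.trans hu)).trans (sup_le ?_ ?_)
    · rw [inf_inf_distrib_right, h.proj hp.1 hp.2.1 inf_le_right,
        h.proj hp.2.2.1 hp.2.2.2.1 inf_le_right, hp.2.2.2.2.1]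
    · rw [inf_inf_distrib_right, sup_comm, h.symm.proj hQ inf_le_right hp.2.1,
        sup_comm, h.symm.proj hQ' inf_le_right hp.2.2.2.1, ← inf_inf_distrib_right,
        hq.2.2.2.2.1, hzz]
  · rw [sup_sup_sup_comm, hp.2.2.2.2.2.1]
    apply le_antisymm (sup_le hzh (sup_le (inf_le_right.trans hzh') (inf_le_right.trans hzh')))
    rw [← h.2.2.2.2.2.1]
    exact sup_le_sup le_rfl ((key z' hlz' le_rfl).trans (sup_le_sup inf_le_right inf_le_right))
  · intro x a b
    have k1 := hp.2.2.2.2.2.2 (x ⊓ z) (le_inf a hlz) inf_le_right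
    have k2 := key (x ⊓ z') (le_inf a hlz') inf_le_right
    refine (h.2.2.2.2.2.2 x a b).trans (sup_le (k1.trans ?_) (k2.trans ?_))
    · exact sup_le_sup (inf_le_inf inf_le_left le_sup_left) (inf_le_inf inf_le_left le_sup_left)
    · exact sup_le_sup (inf_le_inf inf_le_left le_sup_right) (inf_le_inf inf_le_left le_sup_right)

theorem CElt.inf {lo hi z w : G} (hz : CElt lo hi z) (hw : CElt lo hi w) :
    CElt lo hi (z ⊓ w) := by
  obtain ⟨z', hz⟩ := hz
  obtain ⟨w', hw⟩ := hw
  have := hz.extend (hw.restrict_low hz.1 hz.2.1) (cpair_bot hz.2.1)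
  rw [hz.2.2.2.2.1, sup_eq_left.2 (le_inf hw.1 hz.1), inf_comm] at this
  exact ⟨_, this⟩

theorem finite_center (hG : IsLatticeNoetherian G) (lo : G) :
    ∀ c : Set.Ici lo, {x : G | CElt lo c.1 x}.Finite := by
  have wf : WellFounded (fun x y : Set.Ici lo => x < y) := by
    rw [RelEmbedding.wellFounded_iff_isEmpty]
    refine ⟨fun f => ?_⟩
    have hf : ∀ m n, m < n → (f n).1 < (f m).1 := fun m n h => f.map_rel_iff.2 h
    obtain ⟨N, hN⟩ := hG.2 (fun n => (f n).1)
      (antitone_nat_of_succ_le fun n => (hf n (n+1) (Nat.lt_succ_self n)).le)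
      ⟨lo, fun n => (f n).2⟩
    exact absurd (hN (N+1) (Nat.le_succ N)) (hf N (N+1) (Nat.lt_succ_self N)).ne
  intro c
  induction c using wf.induction with
  | _ c ih =>
  by_cases hd : ∃ d, CElt lo c.1 d ∧ d ≠ lo ∧ d ≠ c.1
  · obtain ⟨d, ⟨d', h⟩, h1, h2⟩ := hd
    have lt : d < c.1 := lt_of_le_of_ne h.2.1 h2
    have lt' : d' < c.1 := by
      refine lt_of_le_of_ne h.2.2.2.1 fun e => h1 ?_
      have := h.2.2.2.2.1
      rw [e, inf_eq_left.2 h.2.1] at this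
      exact this
    have f1 := ih ⟨d, h.1⟩ lt
    have f2 := ih ⟨d', h.2.2.1⟩ lt'
    refine Set.Finite.of_injOn (f := fun x => (x ⊓ d, x ⊓ d')) ?_ ?_ (f1.prod f2)
    · rintro x ⟨x', hx⟩
      exact ⟨⟨_, hx.restrict_low h.1 h.2.1⟩, ⟨_, hx.restrict_low h.2.2.1 h.2.2.2.1⟩⟩
    · rintro x ⟨x', hx⟩ y ⟨y', hy⟩ e
      simp only [Prod.mk.injEq] at e
      rw [← h.eq hx.1 hx.2.1, e.1, e.2, h.eq hy.1 hy.2.1]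
  · push Not at hd
    refine (Set.toFinite {lo, c.1}).subset fun x hx => ?_
    by_cases e : x = lo
    · exact Or.inl e
    · exact Or.inr (hd x hx e)

theorem center_inj {lo hi z c c' d d' : G} (hc : CPair lo hi c c') (hd : CPair lo hi d d')
    (hz : lo ≤ z) (hz' : z ≤ hi) (h1 : c ⊓ z = d ⊓ z) (h2 : c ⊔ z = d ⊔ z) : c = d := by
  have e1 := hc.distrib hd.1 hd.2.1 hz hz'
  have e2 := hd.distrib hc.1 hc.2.1 hz hz'
  rw [← h2, inf_eq_right.2 le_sup_left] at e1
  rw [h2, inf_eq_right.2 le_sup_left] at e2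
  rw [inf_comm d c, inf_comm z c, h1] at e1
  rw [inf_comm z d] at e2
  exact e1.trans e2.symm

theorem isCentralIn_iff {lo hi x : G} : IsCentralIn x lo hi ↔ CElt lo hi x := by
  constructor
  · rintro ⟨hmem, L₁, L₂, i₁, i₂, b₁, b₂, φ, hφ⟩
    let z' : Set.Icc lo hi := φ.symm (⊤, ⊥)
    have hlh : lo ≤ hi := hmem.1.trans hmem.2
    have hz' : φ z' = (⊤, ⊥) := by simp [z']
    have k1 : (⟨x, hmem⟩ : Set.Icc lo hi) ⊓ z' ≤ ⟨lo, le_rfl, hlh⟩ := by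
      rw [← φ.le_iff_le, φ.map_inf, hφ, hz', Prod.mk_inf_mk]
      exact ⟨by simp, by simp⟩
    have k2 : (⟨hi, hlh, le_rfl⟩ : Set.Icc lo hi) ≤ ⟨x, hmem⟩ ⊔ z' := by
      rw [← φ.le_iff_le, φ.map_sup, hφ, hz', Prod.mk_sup_mk]
      exact ⟨by simp, by simp⟩
    refine ⟨z'.1, hmem.1, hmem.2, z'.2.1, z'.2.2, ?_, ?_, ?_⟩
    · exact le_antisymm k1 (le_inf hmem.1 z'.2.1)
    · exact le_antisymm (sup_le hmem.2 z'.2.2) k2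
    · intro y a b
      have : (⟨y, a, b⟩ : Set.Icc lo hi) ≤ (⟨y, a, b⟩ ⊓ ⟨x, hmem⟩) ⊔ (⟨y, a, b⟩ ⊓ z') := by
        rw [← φ.le_iff_le, φ.map_sup, φ.map_inf, φ.map_inf, hφ, hz']
        exact ⟨by simp, by simp⟩
      exact this
  · rintro ⟨z', h⟩
    have hlz := h.1
    have hlz' := h.2.2.1
    refine ⟨⟨h.1, h.2.1⟩, ?_⟩
    letI : Fact (lo ≤ x) := ⟨hlz⟩
    letI : Fact (lo ≤ z') := ⟨hlz'⟩
    refine ⟨Set.Icc lo z', Set.Icc lo x, inferInstance, inferInstance, inferInstance,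
      inferInstance, ?_, ?_⟩
    · exact
      { toFun := fun y => (⟨y.1 ⊓ z', le_inf y.2.1 hlz', inf_le_right⟩,
          ⟨y.1 ⊓ x, le_inf y.2.1 hlz, inf_le_right⟩)
        invFun := fun w => ⟨w.2.1 ⊔ w.1.1, le_sup_of_le_left w.2.2.1,
          sup_le (w.2.2.2.trans h.2.1) (w.1.2.2.trans h.2.2.2.1)⟩
        left_inv := fun y => Subtype.ext (h.eq y.2.1 y.2.2)
        right_inv := fun w => Prod.ext
          (Subtype.ext (by
            show (w.2.1 ⊔ w.1.1) ⊓ z' = w.1.1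
            rw [sup_comm]; exact h.symm.proj w.1.2.1 w.1.2.2 w.2.2.2))
          (Subtype.ext (h.proj w.2.2.1 w.2.2.2 w.1.2.2))
        map_rel_iff' := by
          intro y w
          constructor
          · rintro ⟨h1, h2⟩
            show y.1 ≤ w.1
            rw [← h.eq y.2.1 y.2.2, ← h.eq w.2.1 w.2.2]
            exact sup_le_sup h2 h1
          · intro hyw
            exact ⟨inf_le_inf_right z' hyw, inf_le_inf_right x hyw⟩ }
    · exact Prod.ext (Subtype.ext h.2.2.2.2.1) (Subtype.ext (inf_idem x))

end lat

section grp
variable {G : Type u} [Lattice G] [Group G]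

def rightIso [CovariantClass G G (Function.swap (· * ·)) (· ≤ ·)] (g : G) : G ≃o G where
  toEquiv := Equiv.mulRight g
  map_rel_iff' := by
    intro x y
    constructor
    · intro h
      have := CovariantClass.elim (μ := Function.swap (· * ·)) (r := (· ≤ ·)) g⁻¹ h
      simpa [Function.swap] using this
    · intro h
      exact CovariantClass.elim (μ := Function.swap (· * ·)) (r := (· ≤ ·)) g h

def leftIso {s : G} (hs : IsNormal s) : G ≃o G where
  toEquiv := Equiv.mulLeft s
  map_rel_iff' := by
    intro x y
    show s * x ≤ s * y ↔ x ≤ y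
    rw [← inf_eq_left, ← (hs x y).1, mul_right_inj, inf_eq_left]

variable [CovariantClass G G (Function.swap (· * ·)) (· ≤ ·)] [IsModularLattice G]

theorem unit_central (hG : IsLatticeNoetherian G) {s : G} (hs : IsNormal s)
    {a : G} (ha : CElt s⁻¹ 1 a) : CElt (s⁻¹ * a) a s⁻¹ := by
  obtain ⟨a', ha⟩ := ha
  have ha0 := ha.1
  have ha1 := ha.2.1
  have hl : s⁻¹ * a ≤ s⁻¹ := by
    have := (leftIso hs).le_iff_le (x := s⁻¹ * a) (y := s⁻¹)
    rw [← this]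
    simpa [leftIso] using ha1
  have fP : Finite {x : G // CElt s⁻¹ a x} := (finite_center hG s⁻¹ ⟨a, ha0⟩)
  have fQ : Finite {x : G // CElt a 1 x} := (finite_center hG a ⟨1, ha1⟩)
  have mid : ∀ p q, CElt s⁻¹ a p → CElt a 1 q →
      CElt (s⁻¹ * a) a ((p ⊔ q ⊓ a') * a) := by
    rintro p q ⟨p', hp⟩ ⟨q', hq⟩
    have := CElt.map ⟨_, ha.extend hp hq⟩ (rightIso a)
    change CElt (s⁻¹ * a) (1 * a) ((p ⊔ q ⊓ a') * a) at this
    rwa [one_mul] at this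
  let F : {x : G // CElt s⁻¹ a x} × {x : G // CElt a 1 x} →
      {x : G // CElt s⁻¹ a x} × {x : G // CElt a 1 x} := fun w =>
    (⟨(w.1.1 ⊔ w.2.1 ⊓ a') * a ⊔ s⁻¹, by
        obtain ⟨c', hc⟩ := mid _ _ w.1.2 w.2.2
        exact ⟨_, hc.restrict_high hl ha0⟩⟩,
     ⟨s * ((w.1.1 ⊔ w.2.1 ⊓ a') * a ⊓ s⁻¹), by
        obtain ⟨c', hc⟩ := mid _ _ w.1.2 w.2.2
        have := CElt.map ⟨_, hc.restrict_low hl ha0⟩ (leftIso hs)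
        change CElt (s * (s⁻¹ * a)) (s * s⁻¹) (s * ((w.1.1 ⊔ w.2.1 ⊓ a') * a ⊓ s⁻¹)) at this
        rwa [mul_inv_cancel_left, mul_inv_cancel] at this⟩)
  have hF : Function.Injective F := by
    rintro ⟨⟨p, hp⟩, ⟨q, hq⟩⟩ ⟨⟨r, hr⟩, ⟨t, ht⟩⟩ e
    simp only [F, Prod.mk.injEq, Subtype.mk.injEq, mul_right_inj] at e
    obtain ⟨c', hc⟩ := mid _ _ hp hq
    obtain ⟨d', hd⟩ := mid _ _ hr ht
    have := mul_right_cancel (center_inj hc hd hl ha0 e.2 e.1)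
    obtain ⟨p', hp⟩ := hp
    obtain ⟨q', hq⟩ := hq
    obtain ⟨r', hr⟩ := hr
    obtain ⟨t', ht⟩ := ht
    have e1 : p = r := by
      rw [← ha.proj hp.1 hp.2.1 (inf_le_right : q ⊓ a' ≤ a'), this,
        ha.proj hr.1 hr.2.1 inf_le_right]
    have key : ∀ p q, p ≤ a → a ≤ q → q ≤ 1 → (p ⊔ q ⊓ a') ⊔ a = q := by
      intro p q h1 h2 h3
      rw [sup_right_comm, sup_eq_right.2 h1, inf_comm, ← sup_inf_of_le h2, ha.2.2.2.2.2.1,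
        inf_eq_right.2 h3]
    have e2 : q = t := by
      rw [← key p q hp.2.1 hq.1 hq.2.1, this, key r t hr.2.1 ht.1 ht.2.1]
    subst e1 e2
    rfl
  obtain ⟨w, hw⟩ := (Finite.injective_iff_surjective.1 hF)
    (⟨s⁻¹, _, cpair_bot ha0⟩, ⟨1, _, (cpair_bot ha1).symm⟩)
  have m := mid _ _ w.1.2 w.2.2
  have hw1 : (w.1.1 ⊔ w.2.1 ⊓ a') * a ⊔ s⁻¹ = s⁻¹ := congrArg (fun v => v.1.1) hw
  have hw2 : s * ((w.1.1 ⊔ w.2.1 ⊓ a') * a ⊓ s⁻¹) = 1 := congrArg (fun v => v.2.1) hw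
  have e1 := sup_eq_right.1 hw1
  have e2 := inf_eq_right.1 (eq_inv_of_mul_eq_one_right hw2)
  rwa [le_antisymm e1 e2] at m

theorem arrow_central (hG : IsLatticeNoetherian G) {s : G} (hs : IsNormal s)
    {a b : G} (ha : CElt s⁻¹ 1 a) (hb : CElt s⁻¹ 1 b) (hba : b ≤ a) :
    CElt s⁻¹ 1 (b * a⁻¹) := by
  obtain ⟨z', hz⟩ := unit_central hG hs ha
  obtain ⟨a', ha⟩ := ha
  obtain ⟨b', hb⟩ := hb
  have h1 := hb.restrict_low ha.1 ha.2.1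
  rw [inf_eq_left.2 hba] at h1
  have h2 := hz.extend (cpair_bot hz.1).symm h1
  have e : s⁻¹ ⊔ b ⊓ z' = b := by
    rw [inf_comm, ← sup_inf_of_le hb.1, hz.2.2.2.2.2.1, inf_eq_right.2 hba]
  rw [e] at h2
  have := CElt.map ⟨_, h2⟩ (rightIso a⁻¹)
  simpa [rightIso] using this

end grp

/-- In a modular noetherian right ℓ-group with `s⁻¹ = ⋀ X(G⁻)` a strong order unit, if
`a, b` are central in the strong order interval `[s⁻¹, 1]` and `b ≤ a`, then `b * a⁻¹`
is central as well; consequently the center is closed under `a → b = (a ⊓ b) a⁻¹`. -/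
theorem center_closed_under_arrow {G : Type u} [Lattice G] [Group G]
    [CovariantClass G G (Function.swap (· * ·)) (· ≤ ·)] [IsModularLattice G]
    (hG : IsLatticeNoetherian G) (s : G)
    (hglb : IsGLB {x : G | x ⋖ 1} s⁻¹) (hs : IsStrongOrderUnit s)
    (a b : G) (ha : IsCentralIn a s⁻¹ 1) (hb : IsCentralIn b s⁻¹ 1) :
    (b ≤ a → IsCentralIn (b * a⁻¹) s⁻¹ 1) ∧
    IsCentralIn ((a ⊓ b) * a⁻¹) s⁻¹ 1 := by
  rw [isCentralIn_iff] at ha hb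
  simp only [isCentralIn_iff]
  exact ⟨fun h => arrow_central hG hs.2.1 ha hb h,
    arrow_central hG hs.2.1 ha (ha.inf hb) inf_le_left⟩
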